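/- Suppose ψ : (0,∞) → ℂ is continuously differentiable with compact support in (0,∞). Then for all R > 0, A ≥ 0, and κ ∈ ℝ, |κ ∫_0^R ψ(ρ) e^{±iAρ} ρ^{-1+iκ} dρ| ≤ C(1+|κ|)² (‖ψ'‖_{L¹} + ‖ψ‖_{L^∞}), where C is the absolute constant from the unweighted estimate |κ ∫_ε^R e^{±iAρ} ρ^{-1+iκ} dρ| ≤ C(1+|κ|)². -/

import Mathlib

open MeasureTheory Complex

/-- Integration by parts as an inequality. -/
lemma norm_integral_mul_deriv_le {u v u' v' : ℝ → ℂ} {a b : ℝ} (hab : a ≤ b)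
    (hu : ∀ x ∈ Set.Icc a b, HasDerivAt u (u' x) x)
    (hv : ∀ x ∈ Set.Icc a b, HasDerivAt v (v' x) x)
    (hu' : ContinuousOn u' (Set.Icc a b)) (hv' : ContinuousOn v' (Set.Icc a b)) :
    ‖∫ x in a..b, u x * v' x‖ ≤
      ‖u b‖ * ‖v b‖ + ‖u a‖ * ‖v a‖ + ∫ x in a..b, ‖u' x‖ * ‖v x‖ := by
  rw [← Set.uIcc_of_le hab] at hu hv hu' hv'
  rw [intervalIntegral.integral_mul_deriv_eq_deriv_mul hu hv hu'.intervalIntegrable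
    hv'.intervalIntegrable]
  have hint : ‖∫ x in a..b, u' x * v x‖ ≤ ∫ x in a..b, ‖u' x‖ * ‖v x‖ := by
    simpa only [norm_mul] using
      intervalIntegral.norm_integral_le_integral_norm (f := fun x => u' x * v x) hab
  calc ‖u b * v b - u a * v a - ∫ x in a..b, u' x * v x‖
      ≤ ‖u b * v b - u a * v a‖ + ‖∫ x in a..b, u' x * v x‖ := norm_sub_le _ _
    _ ≤ ‖u b * v b‖ + ‖u a * v a‖ + ‖∫ x in a..b, u' x * v x‖ := by
        gcongr
        exact norm_sub_le _ _
    _ ≤ _ := by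
        rw [norm_mul, norm_mul]
        gcongr

lemma norm_exp_I_mul_ofReal_eq_one (x : ℝ) : ‖exp (I * Complex.ofReal x)‖ = 1 := by
  rw [mul_comm, norm_exp_ofReal_mul_I]

lemma hasDerivAt_exp_I_mul_ofReal (B x : ℝ) :
    HasDerivAt (fun ρ : ℝ => exp (I * Complex.ofReal (B * ρ)))
      (I * B * exp (I * Complex.ofReal (B * x))) x := by
  have h : HasDerivAt (fun ρ : ℝ => I * Complex.ofReal (B * ρ)) (I * B) x := by
    simpa using (((hasDerivAt_id x).const_mul B).ofReal_comp).const_mul I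
  simpa [mul_comm] using h.cexp

lemma continuousOn_ofReal_cpow (c : ℂ) :
    ContinuousOn (fun ρ : ℝ => (ρ : ℂ) ^ c) (Set.Ioi 0) := fun x hx =>
  (continuousAt_ofReal_cpow_const x c (Or.inr (ne_of_gt hx))).continuousWithinAt

lemma continuousOn_oscillatory_kernel (B : ℝ) (c : ℂ) :
    ContinuousOn (fun ρ : ℝ => exp (I * Complex.ofReal (B * ρ)) * (ρ : ℂ) ^ c) (Set.Ioi 0) :=
  ContinuousOn.mul (by fun_prop) (continuousOn_ofReal_cpow c)

/-- The estimate in the region where the phase `B ρ` does not oscillate. -/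
lemma norm_oscillatory_integral_le_of_abs_mul_le_one {κ a b B : ℝ} (ha : 0 < a) (hab : a ≤ b)
    (hB : |B| * b ≤ 1) :
    ‖(κ : ℂ) * ∫ ρ in a..b, exp (I * Complex.ofReal (B * ρ)) * (ρ : ℂ) ^ (-1 + I * (κ : ℂ))‖
      ≤ 3 := by
  rcases eq_or_ne κ 0 with rfl | hκ
  · simp
  have hκ' : 0 < |κ| := abs_pos.2 hκ
  have hpos : ∀ x ∈ Set.Icc a b, 0 < x := fun x hx => ha.trans_le hx.1
  have hc : (-1 + I * (κ : ℂ)) + 1 = I * κ := by ring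
  have hnorm : ∀ x ∈ Set.Icc a b, ‖(x : ℂ) ^ (I * (κ : ℂ)) / (I * κ)‖ = |κ|⁻¹ := by
    intro x hx
    rw [norm_div, norm_cpow_eq_rpow_re_of_pos (hpos x hx)]
    simp
  have key := norm_integral_mul_deriv_le hab
    (u := fun ρ : ℝ => exp (I * Complex.ofReal (B * ρ)))
    (v := fun ρ : ℝ => (ρ : ℂ) ^ (I * (κ : ℂ)) / (I * κ))
    (v' := fun ρ : ℝ => (ρ : ℂ) ^ (-1 + I * (κ : ℂ)))
    (fun x _ => hasDerivAt_exp_I_mul_ofReal B x)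
    (fun x hx => by
      have h := hasDerivAt_ofReal_cpow_const' (hpos x hx).ne'
        (r := -1 + I * (κ : ℂ)) (by simp [hκ])
      rwa [hc] at h)
    (by fun_prop)
    ((continuousOn_ofReal_cpow _).mono hpos)
  have hint : ∫ x in a..b, ‖I * B * exp (I * Complex.ofReal (B * x))‖ *
      ‖(x : ℂ) ^ (I * (κ : ℂ)) / (I * κ)‖ = (b - a) * (|B| * |κ|⁻¹) := by
    rw [← smul_eq_mul (b - a), ← intervalIntegral.integral_const]
    refine intervalIntegral.integral_congr fun x hx => ?_
    rw [Set.uIcc_of_le hab] at hx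
    simp only [hnorm x hx, norm_mul, norm_exp_I_mul_ofReal_eq_one]
    simp
  rw [hint, hnorm a ⟨le_rfl, hab⟩, hnorm b ⟨hab, le_rfl⟩, norm_exp_I_mul_ofReal_eq_one,
    norm_exp_I_mul_ofReal_eq_one] at key
  rw [norm_mul, norm_real, Real.norm_eq_abs]
  calc _ ≤ |κ| * (1 * |κ|⁻¹ + 1 * |κ|⁻¹ + (b - a) * (|B| * |κ|⁻¹)) := by gcongr
    _ = 2 + |B| * b - |B| * a := by field_simp; ring
    _ ≤ 3 := by nlinarith [mul_nonneg (abs_nonneg B) ha.le]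

/-- The estimate in the region where the phase `B ρ` oscillates. -/
lemma norm_oscillatory_integral_le_of_one_le_abs_mul {κ a b B : ℝ} (ha : 0 < a) (hab : a ≤ b)
    (hB : 1 ≤ |B| * a) :
    ‖∫ ρ in a..b, exp (I * Complex.ofReal (B * ρ)) * (ρ : ℂ) ^ (-1 + I * (κ : ℂ))‖
      ≤ 3 + |κ| := by
  have hB0 : B ≠ 0 := by
    rintro rfl
    norm_num at hB
  have hB' : 0 < |B| := abs_pos.2 hB0
  have hb : 0 < b := ha.trans_le hab
  have hpos : ∀ x ∈ Set.Icc a b, 0 < x := fun x hx => ha.trans_le hx.1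
  have hre : -1 + I * (κ : ℂ) - 1 = -2 + I * κ := by ring
  have hne : -1 + I * (κ : ℂ) ≠ 0 := fun h => by simpa using congrArg re h
  have hcκ : ‖-1 + I * (κ : ℂ)‖ ≤ 1 + |κ| := (norm_add_le _ _).trans (by simp)
  have hexp : ∀ x : ℝ, ‖exp (I * Complex.ofReal (B * x)) / (I * B)‖ = |B|⁻¹ := by
    intro x
    rw [norm_div, norm_exp_I_mul_ofReal_eq_one]
    simp
  have hpow : ∀ x ∈ Set.Icc a b, ‖(x : ℂ) ^ (-1 + I * (κ : ℂ))‖ = x⁻¹ := by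
    intro x hx
    rw [norm_cpow_eq_rpow_re_of_pos (hpos x hx)]
    simp [Real.rpow_neg_one]
  have key := norm_integral_mul_deriv_le hab
    (u := fun ρ : ℝ => (ρ : ℂ) ^ (-1 + I * (κ : ℂ)))
    (u' := fun ρ : ℝ => (ρ : ℂ) ^ (-2 + I * (κ : ℂ)) * (-1 + I * κ))
    (v := fun ρ : ℝ => exp (I * Complex.ofReal (B * ρ)) / (I * B))
    (v' := fun ρ : ℝ => exp (I * Complex.ofReal (B * ρ)))
    (fun x hx => by
      have h := hasDerivAt_ofReal_cpow_const (hpos x hx).ne' hne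
      rwa [hre, mul_comm (-1 + I * (κ : ℂ))] at h)
    (fun x _ => by
      have h := (hasDerivAt_exp_I_mul_ofReal B x).div_const (I * B)
      rwa [mul_div_cancel_left₀ _ (by simp [hB0])] at h)
    (((continuousOn_ofReal_cpow _).mono hpos).mul continuousOn_const)
    (by fun_prop)
  have hint : ∫ x in a..b, ‖(x : ℂ) ^ (-2 + I * (κ : ℂ)) * (-1 + I * κ)‖ *
      ‖exp (I * Complex.ofReal (B * x)) / (I * B)‖ =
        (a⁻¹ - b⁻¹) * (‖-1 + I * (κ : ℂ)‖ * |B|⁻¹) := by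
    have h : ∫ x in a..b, x ^ (-2 : ℤ) = a⁻¹ - b⁻¹ := by
      rw [integral_zpow (Or.inr ⟨by norm_num, by
        rw [Set.uIcc_of_le hab]
        exact fun h => ha.not_ge h.1⟩)]
      norm_num
      ring
    rw [← h, ← intervalIntegral.integral_mul_const]
    refine intervalIntegral.integral_congr fun x hx => ?_
    rw [Set.uIcc_of_le hab] at hx
    simp only [hexp, norm_mul, norm_cpow_eq_rpow_re_of_pos (hpos x hx)]
    rw [show (-2 + I * (κ : ℂ)).re = ((-2 : ℤ) : ℝ) by simp, Real.rpow_intCast]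
    ring
  rw [hint, hpow a ⟨le_rfl, hab⟩, hpow b ⟨hab, le_rfl⟩, hexp, hexp] at key
  simp_rw [mul_comm (exp _)]
  have hab' : b⁻¹ ≤ a⁻¹ := inv_anti₀ ha hab
  have hle : a⁻¹ * |B|⁻¹ ≤ 1 := by
    rw [← mul_inv, mul_comm]
    exact inv_le_one_of_one_le₀ hB
  calc _ ≤ b⁻¹ * |B|⁻¹ + a⁻¹ * |B|⁻¹ + (a⁻¹ - b⁻¹) * (‖-1 + I * (κ : ℂ)‖ * |B|⁻¹) := key
    _ ≤ a⁻¹ * |B|⁻¹ + a⁻¹ * |B|⁻¹ + a⁻¹ * ((1 + |κ|) * |B|⁻¹) := by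
        gcongr
        exact sub_le_self _ (inv_pos.2 hb).le
    _ = (a⁻¹ * |B|⁻¹) * (3 + |κ|) := by ring
    _ ≤ 3 + |κ| := mul_le_of_le_one_left (by positivity) hle

/-- The unweighted estimate. -/
lemma norm_oscillatory_integral_le {κ a b : ℝ} (B : ℝ) (ha : 0 < a) (hab : a ≤ b) :
    ‖(κ : ℂ) * ∫ ρ in a..b, exp (I * Complex.ofReal (B * ρ)) * (ρ : ℂ) ^ (-1 + I * (κ : ℂ))‖
      ≤ 3 * (1 + |κ|) ^ 2 := by
  have hκ := abs_nonneg κ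
  have high : ∀ {m : ℝ}, 0 < m → m ≤ b → 1 ≤ |B| * m →
      ‖(κ : ℂ) * ∫ ρ in m..b, exp (I * Complex.ofReal (B * ρ)) * (ρ : ℂ) ^ (-1 + I * (κ : ℂ))‖
        ≤ |κ| * (3 + |κ|) := by
    intro m hm hmb hBm
    rw [norm_mul, norm_real, Real.norm_eq_abs]
    gcongr
    exact norm_oscillatory_integral_le_of_one_le_abs_mul hm hmb hBm
  rcases le_total (|B| * b) 1 with hb | hb
  · exact (norm_oscillatory_integral_le_of_abs_mul_le_one ha hab hb).trans (by nlinarith)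
  rcases le_total 1 (|B| * a) with h | h
  · exact (high ha hab h).trans (by nlinarith)
  have hB : 0 < |B| := by
    by_contra! h0
    nlinarith
  have hBm : |B| * |B|⁻¹ = 1 := mul_inv_cancel₀ hB.ne'
  have ham : a ≤ |B|⁻¹ := le_of_mul_le_mul_left (h.trans hBm.ge) hB
  have hmb : |B|⁻¹ ≤ b := le_of_mul_le_mul_left (hBm.le.trans hb) hB
  have hm : 0 < |B|⁻¹ := inv_pos.2 hB
  have hii : ∀ {c d : ℝ}, 0 < c → c ≤ d → IntervalIntegrable
      (fun ρ : ℝ => exp (I * Complex.ofReal (B * ρ)) * (ρ : ℂ) ^ (-1 + I * (κ : ℂ)))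
      volume c d := by
    intro c d hc hcd
    refine ((continuousOn_oscillatory_kernel B _).mono ?_).intervalIntegrable
    rw [Set.uIcc_of_le hcd]
    exact fun x hx => hc.trans_le hx.1
  rw [← intervalIntegral.integral_add_adjacent_intervals (hii ha ham) (hii hm hmb), mul_add]
  refine (norm_add_le _ _).trans ((add_le_add
    (norm_oscillatory_integral_le_of_abs_mul_le_one ha ham hBm.le) (high hm hmb hBm.ge)).trans ?_)
  nlinarith

/-- A function with compact support in `(0, ∞)` vanishes near the origin. -/
lemma exists_forall_le_eq_zero {ψ : ℝ → ℂ} (hc : HasCompactSupport ψ)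
    (hs : tsupport ψ ⊆ Set.Ioi 0) {R : ℝ} (hR : 0 < R) :
    ∃ ε, 0 < ε ∧ ε ≤ R ∧ ∀ x ≤ ε, ψ x = 0 := by
  rcases (tsupport ψ).eq_empty_or_nonempty with h | h
  · exact ⟨R, hR, le_rfl, fun x _ => image_eq_zero_of_notMem_tsupport (by simp [h])⟩
  obtain ⟨m, hm, hmin⟩ := hc.isCompact.exists_isLeast h
  have hm0 : 0 < m := hs hm
  refine ⟨min (m / 2) R, by positivity, min_le_right _ _, fun x hx => ?_⟩
  refine image_eq_zero_of_notMem_tsupport fun hx' => ?_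
  have := hmin hx'
  linarith [min_le_left (m / 2) R]

/-- Inserting a `C¹` amplitude: if all primitives of `g` from points of `(0, ∞)` are bounded by
`M`, then the integral of `ψ g` is bounded by `M (‖ψ'‖_{L¹} + ‖ψ‖_{L^∞})`. -/
lemma norm_integral_amplitude_mul_le {ψ g : ℝ → ℂ} {M R : ℝ} (hψ : ContDiff ℝ 1 ψ)
    (hc : HasCompactSupport ψ) (hs : tsupport ψ ⊆ Set.Ioi 0)
    (hg : ContinuousOn g (Set.Ioi 0))
    (hM : ∀ a b : ℝ, 0 < a → a ≤ b → ‖∫ ρ in a..b, g ρ‖ ≤ M) (hR : 0 < R) :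
    ‖∫ ρ in (0 : ℝ)..R, ψ ρ * g ρ‖ ≤ M * ((∫ ρ : ℝ, ‖deriv ψ ρ‖) + ⨆ ρ : ℝ, ‖ψ ρ‖) := by
  obtain ⟨ε, hε, hεR, hzero⟩ := exists_forall_le_eq_zero hc hs hR
  have hM0 : 0 ≤ M := (norm_nonneg _).trans (hM R R hR le_rfl)
  have hpos : ∀ x ∈ Set.Icc ε R, 0 < x := fun x hx => hε.trans_le hx.1
  have hderiv : Continuous (deriv ψ) := hψ.continuous_deriv le_rfl
  have hleft : ∀ x ∈ Set.uIcc 0 ε, ψ x * g x = 0 := by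
    intro x hx
    rw [Set.uIcc_of_le hε.le] at hx
    rw [hzero x hx.2, zero_mul]
  have hii : IntervalIntegrable (fun ρ => ψ ρ * g ρ) volume ε R := by
    refine ContinuousOn.intervalIntegrable ?_
    rw [Set.uIcc_of_le hεR]
    exact hψ.continuous.continuousOn.mul (hg.mono hpos)
  have hii0 : IntervalIntegrable (fun ρ => ψ ρ * g ρ) volume 0 ε :=
    (IntervalIntegrable.zero (μ := volume) (a := 0) (b := ε)).congr fun x hx =>
      (hleft x (Set.uIoc_subset_uIcc hx)).symm
  rw [← intervalIntegral.integral_add_adjacent_intervals hii0 hii,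
    intervalIntegral.integral_congr (g := fun _ => 0) hleft, intervalIntegral.integral_zero,
    zero_add]
  have hprim : ∀ x ∈ Set.Icc ε R, HasDerivAt (fun r => ∫ ρ in ε..r, g ρ) (g x) x := by
    intro x hx
    refine intervalIntegral.integral_hasDerivAt_right ?_
      (hg.stronglyMeasurableAtFilter isOpen_Ioi x (hpos x hx))
      (hg.continuousAt (Ioi_mem_nhds (hpos x hx)))
    refine (hg.mono ?_).intervalIntegrable
    rw [Set.uIcc_of_le hx.1]
    exact fun y hy => hε.trans_le hy.1
  have key := norm_integral_mul_deriv_le hεR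
    (fun x _ => (hψ.differentiable one_ne_zero x).hasDerivAt) hprim hderiv.continuousOn
    (hg.mono hpos)
  have hint : Integrable (fun ρ => ‖deriv ψ ρ‖) :=
    (hderiv.integrable_of_hasCompactSupport hc.deriv).norm
  have hsup : ‖ψ R‖ ≤ ⨆ ρ : ℝ, ‖ψ ρ‖ :=
    le_ciSup (hψ.continuous.norm.bddAbove_range_of_hasCompactSupport hc.norm) R
  have hlast : ∫ x in ε..R, ‖deriv ψ x‖ * ‖∫ ρ in ε..x, g ρ‖ ≤ (∫ ρ : ℝ, ‖deriv ψ ρ‖) * M := by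
    calc _ ≤ ∫ x in ε..R, ‖deriv ψ x‖ * M := by
          refine intervalIntegral.integral_mono_on hεR ?_
            (hderiv.norm.mul continuous_const).continuousOn.intervalIntegrable
            fun x hx => by
              gcongr
              exact hM ε x hε hx.1
          refine ContinuousOn.intervalIntegrable ?_
          rw [Set.uIcc_of_le hεR]
          exact hderiv.norm.continuousOn.mul
            (fun x hx => (hprim x hx).continuousAt.continuousWithinAt.norm)
      _ = (∫ x in ε..R, ‖deriv ψ x‖) * M := intervalIntegral.integral_mul_const _ _
      _ ≤ _ := by
          gcongr
          rw [intervalIntegral.integral_of_le hεR]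
          exact setIntegral_le_integral hint (.of_forall fun x => norm_nonneg _)
  rw [hzero ε le_rfl, norm_zero, zero_mul, add_zero] at key
  calc _ ≤ ‖ψ R‖ * ‖∫ ρ in ε..R, g ρ‖ +
        ∫ x in ε..R, ‖deriv ψ x‖ * ‖∫ ρ in ε..x, g ρ‖ := key
    _ ≤ (⨆ ρ : ℝ, ‖ψ ρ‖) * M + (∫ ρ : ℝ, ‖deriv ψ ρ‖) * M :=
        add_le_add (mul_le_mul hsup (hM ε R hε hεR) (norm_nonneg _)
          ((norm_nonneg _).trans hsup)) hlast
    _ = _ := by ring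

/-- If `ψ : (0,∞) → ℂ` is `C¹` with compact support in `(0,∞)`, then for all `R > 0`,
`A ≥ 0` and `κ ∈ ℝ`,
`|κ ∫_0^R ψ(ρ) e^{±iAρ} ρ^{-1+iκ} dρ| ≤ C (1+|κ|)^2 (‖ψ'‖_{L¹} + ‖ψ‖_{L^∞})`,
where `C` is the absolute constant from the unweighted estimate
`|κ ∫_ε^R e^{±iAρ} ρ^{-1+iκ} dρ| ≤ C (1+|κ|)^2`. -/
theorem weighted_oscillatory_with_amplitude :
    ∃ C : ℝ, 0 < C ∧
      (∀ (κ ε R A s : ℝ), 0 < ε → ε ≤ R → 0 ≤ A → (s = 1 ∨ s = -1) →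
        ‖(κ : ℂ) * ∫ ρ in ε..R,
            Complex.exp (Complex.I * Complex.ofReal (s * A * ρ)) *
              (ρ : ℂ) ^ ((-1 : ℂ) + Complex.I * (κ : ℂ))‖
          ≤ C * (1 + |κ|) ^ 2) ∧
      ∀ (ψ : ℝ → ℂ), ContDiff ℝ 1 ψ → HasCompactSupport ψ → tsupport ψ ⊆ Set.Ioi 0 →
        ∀ (R A κ s : ℝ), 0 < R → 0 ≤ A → (s = 1 ∨ s = -1) →
          ‖(κ : ℂ) * ∫ ρ in (0 : ℝ)..R,
              ψ ρ * Complex.exp (Complex.I * Complex.ofReal (s * A * ρ)) *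
                (ρ : ℂ) ^ ((-1 : ℂ) + Complex.I * (κ : ℂ))‖
            ≤ C * (1 + |κ|) ^ 2 * ((∫ ρ : ℝ, ‖deriv ψ ρ‖) + ⨆ ρ : ℝ, ‖ψ ρ‖) := by
  refine ⟨3, by norm_num, fun κ ε R A s hε hεR _ _ => norm_oscillatory_integral_le _ hε hεR, ?_⟩
  intro ψ hψ hc hs R A κ s hR _ _
  have h := norm_integral_amplitude_mul_le hψ hc hs (M := 3 * (1 + |κ|) ^ 2)
    (g := fun ρ : ℝ => (κ : ℂ) *
      (exp (I * Complex.ofReal (s * A * ρ)) * (ρ : ℂ) ^ (-1 + I * (κ : ℂ))))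
    (continuousOn_const.mul (continuousOn_oscillatory_kernel (s * A) _))
    (fun a b ha hab => by
      rw [intervalIntegral.integral_const_mul]
      exact norm_oscillatory_integral_le _ ha hab) hR
  rw [← intervalIntegral.integral_const_mul]
  refine Eq.trans_le (congrArg _ (intervalIntegral.integral_congr fun ρ _ => ?_)) h
  ring
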